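/- For all integers m ≥ 0 and l ∈ ℤ, one has S_{m+1,l}(q) = q^{−m−l−1} S_{m,l+1}(q) + q^{−m} S̃_{m,l}(q) + S_{m,l−1}(q), an identity in ℤ[q, q⁻¹]. -/

import Mathlib

/-!
Replacing the factor `ν + l` in the exponent of `S_{m,l}` by `ν + l - b` gives a family
`W_{m,l,b}` with `S_{m,l} = W_{m,l,0}` and `S̃_{m,l} = W_{m,l,1}`. The `q`-Pascal rule, applied to
both binomials of each summand, gives
`W_{m+1,l,b} = q^(b-m-l-1) W_{m,l+1,b} + q^(-l) W_{m,l,b-1} + W_{m,l-1,b-1}`.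
At `b = 0` the last two terms have the parameter `b = -1`, which is traded for `0` and `1` by the
identity `W_{m,l-1,b} + q^(b-m) W_{m,l,b+1} = W_{m,l-1,b-1} + q^(b-l) W_{m,l,b-1}`, a consequence
of `(1 - q^k) C(n,k) = (1 - q^(n-k+1)) C(n,k-1)`.
-/

open LaurentPolynomial

/-- The Gaussian (q-)binomial coefficient `C(n,k)_q` as a Laurent polynomial in `q`,
defined by the q-Pascal recursion `C(n+1,k+1)_q = C(n,k)_q + q^(k+1) C(n,k+1)_q`. -/
noncomputable def qbinom : ℕ → ℕ → LaurentPolynomial ℤ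
  | _, 0 => 1
  | 0, _ + 1 => 0
  | n + 1, k + 1 => qbinom n k + T ((k : ℤ) + 1) * qbinom n (k + 1)

/-- `C(n,k)_q` for integer arguments, zero unless `0 ≤ k ≤ n`. -/
noncomputable def qbinomZ (n k : ℤ) : LaurentPolynomial ℤ :=
  if 0 ≤ k ∧ k ≤ n then qbinom n.toNat k.toNat else 0

/-- `S_{m,l}(q) = Σ_{ν∈ℤ} q^{(ν+l−m)(ν+l)+ν(ν−m)} C(m,ν)_q C(ν, m−l−ν)_q`. -/
noncomputable def Sq (m : ℕ) (l : ℤ) : LaurentPolynomial ℤ :=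
  ∑ᶠ ν : ℤ,
    T ((ν + l - m) * (ν + l) + ν * (ν - m)) * (qbinomZ m ν * qbinomZ ν (m - l - ν))

/-- `S̃_{m,l}(q) = Σ_{ν∈ℤ} q^{(ν+l−m)(ν+l−1)+ν(ν−m)} C(m,ν)_q C(ν, m−l−ν)_q`. -/
noncomputable def Sqt (m : ℕ) (l : ℤ) : LaurentPolynomial ℤ :=
  ∑ᶠ ν : ℤ,
    T ((ν + l - m) * (ν + l - 1) + ν * (ν - m)) * (qbinomZ m ν * qbinomZ ν (m - l - ν))

lemma qbinom_zero_right (n : ℕ) : qbinom n 0 = 1 := by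
  cases n <;> rfl

lemma qbinom_eq_zero_of_lt {n k : ℕ} (h : n < k) : qbinom n k = 0 := by
  induction n generalizing k with
  | zero => obtain ⟨k, rfl⟩ := Nat.exists_eq_succ_of_ne_zero h.ne'; rfl
  | succ n ih =>
    obtain ⟨k, rfl⟩ := Nat.exists_eq_succ_of_ne_zero (Nat.ne_zero_of_lt h)
    rw [qbinom, ih (by omega), ih (by omega), mul_zero, add_zero]

lemma qbinomZ_of_neg_right {n k : ℤ} (hk : k < 0) : qbinomZ n k = 0 :=
  if_neg (by omega)

lemma qbinomZ_of_lt {n k : ℤ} (h : n < k) : qbinomZ n k = 0 :=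
  if_neg (by omega)

lemma qbinomZ_natCast (n k : ℕ) : qbinomZ n k = qbinom n k := by
  rcases lt_or_ge n k with h | h
  · rw [qbinomZ_of_lt (by omega), qbinom_eq_zero_of_lt h]
  · simp [qbinomZ, h]

lemma qbinomZ_zero_right {n : ℤ} (hn : 0 ≤ n) : qbinomZ n 0 = 1 := by
  simp [qbinomZ, hn, qbinom_zero_right]

lemma qbinomZ_succ_left {n : ℤ} (hn : 0 ≤ n) (k : ℤ) :
    qbinomZ (n + 1) k = qbinomZ n (k - 1) + T k * qbinomZ n k := by
  rcases lt_trichotomy k 0 with hk | rfl | hk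
  · simp [qbinomZ_of_neg_right hk, qbinomZ_of_neg_right (show k - 1 < 0 by omega)]
  · simp [qbinomZ_zero_right hn, qbinomZ_zero_right (show 0 ≤ n + 1 by omega),
      qbinomZ_of_neg_right]
  · lift n to ℕ using hn
    obtain ⟨j, rfl⟩ : ∃ j : ℕ, k = j + 1 := ⟨(k - 1).toNat, by omega⟩
    rw [add_sub_cancel_right, ← Nat.cast_succ, ← Nat.cast_succ, qbinomZ_natCast, qbinomZ_natCast,
      qbinomZ_natCast, qbinom, Nat.cast_succ]

lemma one_sub_T_mul_qbinomZ (n k : ℤ) :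
    (1 - T k) * qbinomZ n k = (1 - T (n - k + 1)) * qbinomZ n (k - 1) := by
  rcases lt_or_ge n 0 with hn | hn
  · have hzero (j : ℤ) : qbinomZ n j = 0 := if_neg (by omega)
    simp only [hzero, mul_zero]
  induction n, hn using Int.leInduction generalizing k with
  | base =>
    rcases lt_trichotomy k 0 with hk | rfl | hk
    · simp [qbinomZ_of_neg_right hk, qbinomZ_of_neg_right (show k - 1 < 0 by omega)]
    · simp [qbinomZ_of_neg_right]
    · rcases eq_or_ne k 1 with rfl | hk1
      · simp [qbinomZ_of_lt]
      · simp [qbinomZ_of_lt hk, qbinomZ_of_lt (show 0 < k - 1 by omega)]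
  | succ n hn ih =>
    have hT : (T k * T (n - k + 1) : ℤ[T;T⁻¹]) = T (k - 1) * T (n - (k - 1) + 1) := by
      rw [← T_add, ← T_add]; congr 1; ring
    rw [qbinomZ_succ_left hn, qbinomZ_succ_left hn,
      show n + 1 - k + 1 = n - (k - 1) + 1 by ring]
    -- Both sides equal `(1 - q^(n+1)) C(n,k-1)`; `hT` matches the two forms of `q^(n+1)`.
    linear_combination T k * ih k + ih (k - 1) - qbinomZ n (k - 1) * hT

/-- The summand of `qTrinomial m l b` at the index `ν`. -/
noncomputable def qTrinomialTerm (m l b ν : ℤ) : ℤ[T;T⁻¹] :=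
  T ((ν + l - m) * (ν + l - b) + ν * (ν - m)) * (qbinomZ m ν * qbinomZ ν (m - l - ν))

/-- The common generalization of `S_{m,l}` (at `b = 0`) and `S̃_{m,l}` (at `b = 1`). With `q⁻¹` in
place of `q` it is the Andrews–Baxter `q`-trinomial coefficient
`Σ_j q^(j(j+l-b)) C(m,j)_q C(m-j,j+l)_q`; the substitution is `ν = m - l - j`. -/
noncomputable def qTrinomial (m l b : ℤ) : ℤ[T;T⁻¹] :=
  ∑ᶠ ν : ℤ, qTrinomialTerm m l b ν

lemma Sq_eq_qTrinomial (m : ℕ) (l : ℤ) : Sq m l = qTrinomial m l 0 := by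
  simp only [Sq, qTrinomial, qTrinomialTerm, sub_zero]

lemma Sqt_eq_qTrinomial (m : ℕ) (l : ℤ) : Sqt m l = qTrinomial m l 1 :=
  rfl

lemma hasFiniteSupport_qTrinomialTerm (m l b : ℤ) :
    (qTrinomialTerm m l b).HasFiniteSupport := by
  refine (Set.finite_Icc 0 m).subset (Function.support_subset_iff'.2 fun ν hν => ?_)
  have hzero : qbinomZ m ν = 0 := if_neg hν
  rw [qTrinomialTerm, hzero, zero_mul, mul_zero]

lemma finsum_qTrinomialTerm_sub_one (m l b : ℤ) :
    ∑ᶠ ν, qTrinomialTerm m l b (ν - 1) = qTrinomial m l b :=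
  finsum_comp_equiv (Equiv.subRight 1)

lemma hasFiniteSupport_qTrinomialTerm_sub_one (m l b : ℤ) :
    (fun ν => qTrinomialTerm m l b (ν - 1)).HasFiniteSupport :=
  (hasFiniteSupport_qTrinomialTerm m l b).preimage sub_left_injective.injOn

lemma qTrinomialTerm_succ {m : ℤ} (hm : 0 ≤ m) (l b ν : ℤ) :
    qTrinomialTerm (m + 1) l b ν =
      T (b - m - l - 1) * qTrinomialTerm m (l + 1) b (ν - 1) +
        T (-l) * qTrinomialTerm m l (b - 1) (ν - 1) + qTrinomialTerm m (l - 1) (b - 1) ν := by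
  have hpascal : qbinomZ m (ν - 1) * qbinomZ ν (m + 1 - l - ν) =
      qbinomZ m (ν - 1) * (qbinomZ (ν - 1) (m - l - ν) +
        T (m + 1 - l - ν) * qbinomZ (ν - 1) (m + 1 - l - ν)) := by
    rcases lt_or_ge (ν - 1) 0 with hν | hν
    · simp only [qbinomZ_of_neg_right hν, zero_mul]
    · have h := qbinomZ_succ_left hν (m + 1 - l - ν)
      rw [sub_add_cancel, show m + 1 - l - ν - 1 = m - l - ν by ring] at h
      rw [h]
  simp only [qTrinomialTerm]
  rw [qbinomZ_succ_left hm, show m - (l + 1) - (ν - 1) = m - l - ν by ring,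
    show m - l - (ν - 1) = m + 1 - l - ν by ring, show m - (l - 1) - ν = m + 1 - l - ν by ring]
  set E : ℤ := (ν + l - (m + 1)) * (ν + l - b) + ν * (ν - (m + 1))
  have h₁ : (T (b - m - l - 1) * T ((ν - 1 + (l + 1) - m) * (ν - 1 + (l + 1) - b) +
      (ν - 1) * (ν - 1 - m)) : ℤ[T;T⁻¹]) = T E := by
    rw [← T_add]; congr 1; ring
  have h₂ : (T (-l) * T ((ν - 1 + l - m) * (ν - 1 + l - (b - 1)) +
      (ν - 1) * (ν - 1 - m)) : ℤ[T;T⁻¹]) = T E * T (m + 1 - l - ν) := by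
    rw [← T_add, ← T_add]; congr 1; ring
  have h₃ : (T ((ν + (l - 1) - m) * (ν + (l - 1) - (b - 1)) + ν * (ν - m)) : ℤ[T;T⁻¹]) =
      T E * T ν := by
    rw [← T_add]; congr 1; ring
  linear_combination T E * hpascal
    - qbinomZ m (ν - 1) * qbinomZ (ν - 1) (m - l - ν) * h₁
    - qbinomZ m (ν - 1) * qbinomZ (ν - 1) (m + 1 - l - ν) * h₂
    - qbinomZ m ν * qbinomZ ν (m + 1 - l - ν) * h₃

lemma qTrinomial_succ {m : ℤ} (hm : 0 ≤ m) (l b : ℤ) :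
    qTrinomial (m + 1) l b =
      T (b - m - l - 1) * qTrinomial m (l + 1) b + T (-l) * qTrinomial m l (b - 1) +
        qTrinomial m (l - 1) (b - 1) := by
  rw [← finsum_qTrinomialTerm_sub_one m (l + 1), ← finsum_qTrinomialTerm_sub_one m l]
  have hfin {l' b' : ℤ} (c : ℤ[T;T⁻¹]) :
      (fun ν => c * qTrinomialTerm m l' b' (ν - 1)).HasFiniteSupport :=
    .fun_mul_right _ (hasFiniteSupport_qTrinomialTerm_sub_one m l' b')
  simp only [qTrinomial]
  rw [mul_finsum, mul_finsum, ← finsum_add_distrib (hfin _) (hfin _),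
    ← finsum_add_distrib (.fun_add (hfin _) (hfin _)) (hasFiniteSupport_qTrinomialTerm ..)]
  exact finsum_congr (qTrinomialTerm_succ hm l b)

lemma qTrinomialTerm_sub_one_add (m l b ν : ℤ) :
    qTrinomialTerm m (l - 1) b ν + T (b - m) * qTrinomialTerm m l (b + 1) ν =
      qTrinomialTerm m (l - 1) (b - 1) ν + T (b - l) * qTrinomialTerm m l (b - 1) ν := by
  set k : ℤ := m + 1 - l - ν
  have hratio := one_sub_T_mul_qbinomZ ν k
  simp only [qTrinomialTerm]
  rw [show m - (l - 1) - ν = k by ring, show m - l - ν = k - 1 by ring]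
  set E : ℤ := (ν + l - 1 - m) * (ν + l - b) + ν * (ν - m)
  have h₁ : (T ((ν + (l - 1) - m) * (ν + (l - 1) - b) + ν * (ν - m)) : ℤ[T;T⁻¹]) =
      T E * T k := by
    rw [← T_add]; congr 1; ring
  have h₂ : (T (b - m) * T ((ν + l - m) * (ν + l - (b + 1)) + ν * (ν - m)) : ℤ[T;T⁻¹]) =
      T E := by
    rw [← T_add]; congr 1; ring
  have h₃ : (T ((ν + (l - 1) - m) * (ν + (l - 1) - (b - 1)) + ν * (ν - m)) : ℤ[T;T⁻¹]) =
      T E := by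
    congr 1; ring
  have h₄ : (T (b - l) * T ((ν + l - m) * (ν + l - (b - 1)) + ν * (ν - m)) : ℤ[T;T⁻¹]) =
      T E * T (ν - k + 1) := by
    rw [← T_add, ← T_add]; congr 1; ring
  linear_combination qbinomZ m ν * (qbinomZ ν k * (h₁ - h₃) + qbinomZ ν (k - 1) * (h₂ - h₄) -
    T E * hratio)

lemma qTrinomial_sub_one_add (m l b : ℤ) :
    qTrinomial m (l - 1) b + T (b - m) * qTrinomial m l (b + 1) =
      qTrinomial m (l - 1) (b - 1) + T (b - l) * qTrinomial m l (b - 1) := by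
  have hfin {l' b' : ℤ} : (qTrinomialTerm m l' b').HasFiniteSupport :=
    hasFiniteSupport_qTrinomialTerm m l' b'
  simp only [qTrinomial]
  rw [mul_finsum, mul_finsum, ← finsum_add_distrib hfin (.fun_mul_right _ hfin),
    ← finsum_add_distrib hfin (.fun_mul_right _ hfin)]
  exact finsum_congr (qTrinomialTerm_sub_one_add m l b)

/-- S_{m+1,l} = q^{-m-l-1} S_{m,l+1} + q^{-m} St_{m,l} + S_{m,l-1}. -/
theorem S_succ_rec2 (m : ℕ) (l : ℤ) :
    Sq (m + 1) l =
      T (-(m : ℤ) - l - 1) * Sq m (l + 1) + T (-(m : ℤ)) * Sqt m l + Sq m (l - 1) := by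
  have hsucc := qTrinomial_succ (Int.natCast_nonneg m) l 0
  have htrade := qTrinomial_sub_one_add m l 0
  simp only [zero_sub, zero_add] at hsucc htrade
  rw [Sq_eq_qTrinomial, Sq_eq_qTrinomial, Sq_eq_qTrinomial, Sqt_eq_qTrinomial, Nat.cast_succ]
  linear_combination hsucc - htrade
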